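/- There exist no positive integers a, b, c with a ≤ b and c ≥ 6 such that the quadratic form f^{a,b}_c(x,y,z,w) = a·x² + b·y² + c·(z² + z·w + w²) represents every nonnegative integer; that is, for all positive integers a ≤ b and c ≥ 6 there is some nonnegative integer n which cannot be written as a·x² + b·y² + c·(z² + z·w + w²) with x, y, z, w ∈ ℤ. -/

import Mathlib

/-!
The values of `a x² + b y² + c Q` below `c`, where `Q` is nonnegative, are already values of
`a x² + b y²`, so for `c ≥ 6` it is enough that a binary diagonal form misses some `n ≤ 5`.
To represent `1` a coefficient must be `1`, and `x² + b y²` misses `2` if `b = 0` or `b ≥ 3`,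
`3` if `b = 1` (look modulo `4`) and `5` if `b = 2` (look modulo `8`).
-/

theorem sq_add_mul_add_sq_nonneg {R : Type*} [CommRing R] [LinearOrder R] [IsStrictOrderedRing R]
    (z w : R) : 0 ≤ z ^ 2 + z * w + w ^ 2 := by
  nlinarith [sq_nonneg (z + w), sq_nonneg z, sq_nonneg w]

theorem eq_left_of_eq_add_mul_of_lt {n r c q : ℤ} (hr : 0 ≤ r) (hc : 0 ≤ c) (hq : 0 ≤ q)
    (hnc : n < c) (h : n = r + c * q) : n = r := by
  have hq_lt : q < 1 := lt_of_mul_lt_mul_left (show c * q < c * 1 by lia) hc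
  obtain rfl : q = 0 := by lia
  simpa using h

theorem eq_one_or_eq_one_of_one_eq_mul_sq_add_mul_sq {a b : ℕ} {x y : ℤ}
    (h : 1 = a * x ^ 2 + b * y ^ 2) : a = 1 ∨ b = 1 := by
  have h_nat : a * x.natAbs ^ 2 + b * y.natAbs ^ 2 = 1 := by
    zify
    simpa only [sq_abs] using h.symm
  rcases Nat.add_eq_one_iff.mp h_nat with ⟨-, hy⟩ | ⟨hx, -⟩
  · exact .inr (Nat.eq_one_of_mul_eq_one_right hy)
  · exact .inl (Nat.eq_one_of_mul_eq_one_right hx)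

theorem ne_sq_add_mul_sq_of_not_isSquare {n b : ℤ} (hn : ¬IsSquare n) (hb : 0 ≤ b) (hnb : n < b)
    (x y : ℤ) : n ≠ x ^ 2 + b * y ^ 2 := fun h ↦
  hn (eq_left_of_eq_add_mul_of_lt (sq_nonneg x) hb (sq_nonneg y) hnb h ▸ IsSquare.sq x)

theorem three_ne_sq_add_sq_zmod_four : ∀ x y : ZMod 4, 3 ≠ x ^ 2 + y ^ 2 := by
  decide

theorem five_ne_sq_add_two_mul_sq_zmod_eight : ∀ x y : ZMod 8, 5 ≠ x ^ 2 + 2 * y ^ 2 := by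
  decide

theorem exists_le_five_forall_ne_sq_add_mul_sq (b : ℕ) :
    ∃ n : ℕ, n ≤ 5 ∧ ∀ x y : ℤ, (n : ℤ) ≠ x ^ 2 + b * y ^ 2 := by
  have two_not_isSquare : ¬IsSquare (2 : ℤ) := Int.prime_two.not_isSquare
  match b with
  | 0 => exact ⟨2, by simp, fun x _ h ↦ two_not_isSquare ⟨x, by simpa [sq] using h⟩⟩
  | 1 =>
    refine ⟨3, by simp, fun x y h ↦ three_ne_sq_add_sq_zmod_four x y ?_⟩
    simpa using congrArg (Int.cast : ℤ → ZMod 4) h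
  | 2 =>
    refine ⟨5, by simp, fun x y h ↦ five_ne_sq_add_two_mul_sq_zmod_eight x y ?_⟩
    simpa using congrArg (Int.cast : ℤ → ZMod 8) h
  | b + 3 =>
    exact ⟨2, by simp, ne_sq_add_mul_sq_of_not_isSquare two_not_isSquare (by lia) (by lia)⟩

theorem exists_le_five_forall_ne_mul_sq_add_mul_sq (a b : ℕ) :
    ∃ n : ℕ, n ≤ 5 ∧ ∀ x y : ℤ, (n : ℤ) ≠ a * x ^ 2 + b * y ^ 2 := by
  by_cases h_one : a = 1 ∨ b = 1
  · rcases h_one with rfl | rfl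
    · simpa using exists_le_five_forall_ne_sq_add_mul_sq b
    · obtain ⟨n, hn, h_ne⟩ := exists_le_five_forall_ne_sq_add_mul_sq a
      exact ⟨n, hn, fun x y h ↦ h_ne y x (by simpa [add_comm] using h)⟩
  · exact ⟨1, by simp, fun _ _ h ↦ h_one (eq_one_or_eq_one_of_one_eq_mul_sq_add_mul_sq h)⟩

theorem stmt_19_general {ι : Type*} (a b c : ℕ) (hc : 6 ≤ c) (Q : ι → ℤ) (hQ : ∀ v, 0 ≤ Q v) :
    ∃ n : ℕ, n ≤ 5 ∧ ¬ ∃ (x y : ℤ) (v : ι), (n : ℤ) = a * x ^ 2 + b * y ^ 2 + c * Q v := by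
  obtain ⟨n, hn, h_ne⟩ := exists_le_five_forall_ne_mul_sq_add_mul_sq a b
  refine ⟨n, hn, fun ⟨x, y, v, h⟩ ↦ h_ne x y ?_⟩
  exact eq_left_of_eq_add_mul_of_lt (by positivity) (by positivity) (hQ v) (by lia) h

theorem stmt_19 (a b c : ℕ) (ha : 0 < a) (hb : 0 < b) (hab : a ≤ b) (hc : 6 ≤ c) :
    ∃ n : ℕ, ¬ ∃ x y z w : ℤ,
      (n : ℤ) = a * x ^ 2 + b * y ^ 2 + c * (z ^ 2 + z * w + w ^ 2) := by
  obtain ⟨n, -, hn⟩ := stmt_19_general a b c hc (fun v : ℤ × ℤ ↦ v.1 ^ 2 + v.1 * v.2 + v.2 ^ 2)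
    fun v ↦ sq_add_mul_add_sq_nonneg v.1 v.2
  exact ⟨n, fun ⟨x, y, z, w, h⟩ ↦ hn ⟨x, y, (z, w), h⟩⟩
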